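/- arXiv:2205.09848 — 2 statements merged into one kernel-verified Lean document; each statement's English description precedes it below -/
import Mathlib

section
/- For the curvature tensor R̃ of the metric g̃ on ℝ⁴, at every point the following hold: g̃(R̃(e₁,e₂)e₁,e₂) = −1/4, g̃(R̃(e₁,e₂)e₂,e₃) = 1/4, g̃(R̃(e₁,e₄)e₁,e₄) = −1/4, g̃(R̃(e₁,e₄)e₃,e₄) = 1/4, g̃(R̃(e₂,e₃)e₂,e₃) = −1/4, g̃(R̃(e₂,e₄)e₂,e₄) = 1/2, g̃(R̃(e₃,e₄)e₃,e₄) = 3/4; moreover every component g̃(R̃(eᵢ,eⱼ)eₖ,eₗ) that is not obtained from one of these seven by the curvature symmetries (antisymmetry in the first pair, antisymmetry in the last pair, and symmetry under exchanging the pairs) is zero. -/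
noncomputable section

/-- The left-invariant frame fields e₁,e₂,e₃,e₄ on ℝ⁴ (coordinates x,y,z,t = p 0,...,p 3). -/
def eVF (i : Fin 4) (p : Fin 4 → ℝ) : Fin 4 → ℝ :=
  ![![1, 0, 0, 0],
    ![p 3, 1, 0, 0],
    ![(p 3) ^ 2 / 2, p 3, 1, 0],
    ![0, 0, 0, 1]] i

/-- The matrix of the metric g̃ at a point with last coordinate t. -/
def gMat (t : ℝ) : Matrix (Fin 4) (Fin 4) ℝ :=
  !![1, -t, t ^ 2 / 2, 0;
     -t, 1 + t ^ 2, -t * (1 + t ^ 2 / 2), 0;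
     t ^ 2 / 2, -t * (1 + t ^ 2 / 2), 1 + t ^ 2 + t ^ 4 / 4, 0;
     0, 0, 0, 1]

/-- The metric g̃ as a bilinear form on each tangent space. -/
def gMet (p X Y : Fin 4 → ℝ) : ℝ :=
  ∑ i, ∑ j, gMat (p 3) i j * X i * Y j

/-- Partial derivative in direction of the i-th coordinate. -/
def pd (i : Fin 4) (f : (Fin 4 → ℝ) → ℝ) (p : Fin 4 → ℝ) : ℝ :=
  deriv (fun s => f (Function.update p i s)) (p i)

/-- The Christoffel symbols Γᵏᵢⱼ of g̃. -/
def Chr (p : Fin 4 → ℝ) (k i j : Fin 4) : ℝ :=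
  (1 / 2) * ∑ l, (gMat (p 3))⁻¹ k l *
    (pd i (fun q => gMat (q 3) j l) p + pd j (fun q => gMat (q 3) i l) p
      - pd l (fun q => gMat (q 3) i j) p)

/-- The Levi-Civita connection of g̃ in coordinates. -/
def nabla (X Y : (Fin 4 → ℝ) → (Fin 4 → ℝ)) (p : Fin 4 → ℝ) : Fin 4 → ℝ :=
  fun k => (∑ i, X p i * pd i (fun q => Y q k) p)
    + ∑ i, ∑ j, Chr p k i j * X p i * Y p j

/-- Lie bracket of vector fields on ℝ⁴. -/
def bracket (X Y : (Fin 4 → ℝ) → (Fin 4 → ℝ)) (p : Fin 4 → ℝ) : Fin 4 → ℝ :=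
  fderiv ℝ Y p (X p) - fderiv ℝ X p (Y p)

/-- The curvature tensor R̃(X,Y)Z = ∇̃_X ∇̃_Y Z − ∇̃_Y ∇̃_X Z − ∇̃_{[X,Y]} Z. -/
def Riem (X Y Z : (Fin 4 → ℝ) → (Fin 4 → ℝ)) (p : Fin 4 → ℝ) : Fin 4 → ℝ :=
  nabla X (nabla Y Z) p - nabla Y (nabla X Z) p - nabla (bracket X Y) Z p

/-- Sign of an ordered index pair: +1 if i<j, −1 if i>j, 0 if i=j. -/
def pairSign (i j : Fin 4) : ℝ :=
  if i < j then 1 else if j < i then -1 else 0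

/-- Index of the unordered pair {i,j} among (0,1),(0,2),(0,3),(1,2),(1,3),(2,3). -/
def pairIdx (i j : Fin 4) : Fin 6 :=
  ![![0, 0, 1, 2], ![0, 0, 3, 4], ![1, 3, 0, 5], ![2, 4, 5, 0]] i j

/-- The matrix of curvature components on pairs: the seven stated values, zero elsewhere. -/
def curvPairMat : Matrix (Fin 6) (Fin 6) ℝ :=
  !![-1/4, 0, 0, 1/4, 0, 0;
     0, 0, 0, 0, 0, 0;
     0, 0, -1/4, 0, 0, 1/4;
     1/4, 0, 0, -1/4, 0, 0;
     0, 0, 0, 0, 1/2, 0;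
     0, 0, 1/4, 0, 0, 3/4]

/-- The full expected curvature tensor in the frame {eᵢ}, generated from the seven
stated components by antisymmetry in the first pair, antisymmetry in the last pair,
and symmetry under exchange of the pairs; all other components are zero. -/
def RExp (i j k l : Fin 4) : ℝ :=
  pairSign i j * pairSign k l * curvPairMat (pairIdx i j) (pairIdx k l)

/-- The connection coefficients of g̃ in the frame. -/
def cc (i j m : Fin 4) : ℝ :=
  ![![![0,0,0,0], ![0,0,0,1/2], ![0,0,0,0], ![0,-1/2,0,0]],
    ![![0,0,0,1/2], ![0,0,0,0], ![0,0,0,1/2], ![-1/2,0,-1/2,0]],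
    ![![0,0,0,0], ![0,0,0,1/2], ![0,0,0,0], ![0,-1/2,0,0]],
    ![![0,-1/2,0,0], ![1/2,0,-1/2,0], ![0,1/2,0,0], ![0,0,0,0]]] i j m

/-- The inverse metric. -/
def gInv (t : ℝ) : Matrix (Fin 4) (Fin 4) ℝ :=
  !![1 + t ^ 2 + t ^ 4 / 4, t + t ^ 3 / 2, t ^ 2 / 2, 0;
     t + t ^ 3 / 2, 1 + t ^ 2, t, 0;
     t ^ 2 / 2, t, 1, 0;
     0, 0, 0, 1]

/-- The t-derivative of the metric matrix. -/
def gDer (t : ℝ) : Matrix (Fin 4) (Fin 4) ℝ :=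
  !![0, -1, t, 0;
     -1, 2 * t, -1 - 3 / 2 * t ^ 2, 0;
     t, -1 - 3 / 2 * t ^ 2, 2 * t + t ^ 3, 0;
     0, 0, 0, 0]

/-- The t-derivative of the frame. -/
def eDer (i : Fin 4) (t : ℝ) : Fin 4 → ℝ :=
  ![![0, 0, 0, 0], ![1, 0, 0, 0], ![t, 1, 0, 0], ![0, 0, 0, 0]] i

/-- The Christoffel symbols, explicitly. -/
def chrE (t : ℝ) (k i j : Fin 4) : ℝ :=
  ![![![0,0,0,-t/2], ![0,0,0,-1/2+t^2/4], ![0,0,0,0], ![-t/2,-1/2+t^2/4,0,0]],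
    ![![0,0,0,-1/2], ![0,0,0,0], ![0,0,0,-1/2+t^2/4], ![-1/2,0,-1/2+t^2/4,0]],
    ![![0,0,0,0], ![0,0,0,-1/2], ![0,0,0,t/2], ![0,-1/2,t/2,0]],
    ![![0,1/2,-t/2,0], ![1/2,-t,1/2+3/4*t^2,0], ![-t/2,1/2+3/4*t^2,-t-t^3/2,0], ![0,0,0,0]]] k i j

theorem gInv_eq (t : ℝ) : (gMat t)⁻¹ = gInv t := by
  apply Matrix.inv_eq_right_inv
  ext i j
  fin_cases i <;> fin_cases j <;>
    simp [gMat, gInv, Matrix.mul_apply, Fin.sum_univ_four] <;> ring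

theorem hasDerivAt_gMat (t : ℝ) (i j : Fin 4) :
    HasDerivAt (fun s => gMat s i j) (gDer t i j) t := by
  have h1 : HasDerivAt (fun s : ℝ => s) 1 t := hasDerivAt_id t
  have h2 := h1.pow 2
  have h4 := h1.pow 4
  have a0 : HasDerivAt (fun _ : ℝ => (0:ℝ)) 0 t := hasDerivAt_const t 0
  have a1 : HasDerivAt (fun _ : ℝ => (1:ℝ)) 0 t := hasDerivAt_const t 1
  have b01 := h1.neg
  have b02 := h2.div_const 2
  have b11 := h2.const_add 1
  have b12 := h1.neg.mul ((h2.div_const 2).const_add 1)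
  have b22 := (h2.const_add 1).add (h4.div_const 4)
  fin_cases i <;> fin_cases j <;> simp only [gMat, gDer]
  · exact a1
  · exact b01
  · exact b02.congr_deriv (by change _ = t; norm_num)
  · exact a0
  · exact b01
  · exact b11.congr_deriv (by change _ = 2 * t; norm_num)
  · exact b12.congr_deriv (by change _ = -1 - 3 / 2 * t ^ 2; norm_num; ring)
  · exact a0
  · exact b02.congr_deriv (by change _ = t; norm_num)
  · exact b12.congr_deriv (by change _ = -1 - 3 / 2 * t ^ 2; norm_num; ring)
  · exact b22.congr_deriv (by change _ = 2 * t + t ^ 3; norm_num)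
  · exact a0
  · exact a0
  · exact a0
  · exact a0
  · exact a1

theorem pd_fun {f : ℝ → ℝ} {df : ℝ} {p : Fin 4 → ℝ} (h : HasDerivAt f df (p 3)) (i : Fin 4) :
    pd i (fun q => f (q 3)) p = if i = 3 then df else 0 := by
  unfold pd
  split_ifs with hi
  · subst hi
    simpa using h.deriv
  · have : ∀ s, Function.update p i s 3 = p 3 := fun s =>
      Function.update_of_ne (Ne.symm hi) _ _
    simp [this]

theorem Chr_eq (p : Fin 4 → ℝ) (k i j : Fin 4) : Chr p k i j = chrE (p 3) k i j := by
  unfold Chr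
  simp only [gInv_eq, fun a b c => pd_fun (hasDerivAt_gMat (p 3) a b) c]
  generalize p 3 = t
  fin_cases k <;> fin_cases i <;> fin_cases j <;>
    simp [gInv, gDer, chrE, Fin.sum_univ_four] <;> ring

/-- The frame as a function of t. -/
def eT (i : Fin 4) (t : ℝ) : Fin 4 → ℝ :=
  ![![1, 0, 0, 0], ![t, 1, 0, 0], ![t ^ 2 / 2, t, 1, 0], ![0, 0, 0, 1]] i

theorem hasDerivAt_eT (t : ℝ) (i k : Fin 4) :
    HasDerivAt (fun s => eT i s k) (eDer i t k) t := by
  have h1 : HasDerivAt (fun s : ℝ => s) 1 t := hasDerivAt_id t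
  have h2 := (h1.pow 2).div_const 2
  have a0 : HasDerivAt (fun _ : ℝ => (0:ℝ)) 0 t := hasDerivAt_const t 0
  have a1 : HasDerivAt (fun _ : ℝ => (1:ℝ)) 0 t := hasDerivAt_const t 1
  fin_cases i <;> fin_cases k <;> simp only [eT, eDer] <;>
    first
    | exact a0
    | exact a1
    | exact h1
    | exact h2.congr_deriv (by change _ = t; norm_num)

theorem eVF_eq (i : Fin 4) (p : Fin 4 → ℝ) : eVF i p = eT i (p 3) := rfl

/-- A constant-coefficient combination of the frame. -/
def comb (a : Fin 4 → ℝ) (p : Fin 4 → ℝ) : Fin 4 → ℝ := fun k => ∑ m, a m * eVF m p k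

theorem nabla_frame (i j : Fin 4) : nabla (eVF i) (eVF j) = comb (cc i j) := by
  funext p k
  unfold nabla comb
  simp only [Chr_eq, eVF_eq, fun a b c => pd_fun (hasDerivAt_eT (p 3) a b) c]
  generalize p 3 = t
  fin_cases i <;> fin_cases j <;> fin_cases k <;>
    simp [eT, eDer, chrE, cc, Fin.sum_univ_four] <;> ring

theorem nabla_comb (X : (Fin 4 → ℝ) → (Fin 4 → ℝ)) (a p : Fin 4 → ℝ) (k : Fin 4) :
    nabla X (comb a) p k = ∑ m, a m * nabla X (eVF m) p k := by
  have h : ∀ i, pd i (fun q => comb a q k) p = ∑ m, a m * pd i (fun q => eVF m q k) p := by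
    intro i
    have hd : HasDerivAt (fun t => ∑ m, a m * eT m t k) (∑ m, a m * eDer m (p 3) k) (p 3) :=
      HasDerivAt.fun_sum fun m _ => (hasDerivAt_eT (p 3) m k).const_mul (a m)
    have := pd_fun hd i
    simp only [comb, eVF_eq, fun a b c => pd_fun (hasDerivAt_eT (p 3) a b) c, this]
    split_ifs <;> simp
  unfold nabla
  simp only [h]
  simp only [comb, Fin.sum_univ_four]
  ring

theorem comb_nabla (X Z : (Fin 4 → ℝ) → (Fin 4 → ℝ)) (a p : Fin 4 → ℝ) (k : Fin 4)
    (hX : X p = comb a p) :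
    nabla X Z p k = ∑ m, a m * nabla (eVF m) Z p k := by
  unfold nabla
  rw [hX]
  simp only [comb, Fin.sum_univ_four]
  ring

theorem fderiv_eVF (j : Fin 4) (p v : Fin 4 → ℝ) :
    fderiv ℝ (eVF j) p v = fun k => v 3 * eDer j (p 3) k := by
  have h : HasFDerivAt (eVF j)
      (ContinuousLinearMap.pi fun k => eDer j (p 3) k •
        (ContinuousLinearMap.proj 3 : (Fin 4 → ℝ) →L[ℝ] ℝ)) p := by
    rw [hasFDerivAt_pi]
    intro k
    have h3 : HasFDerivAt (fun q : Fin 4 → ℝ => q 3)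
        (ContinuousLinearMap.proj 3 : (Fin 4 → ℝ) →L[ℝ] ℝ) p := hasFDerivAt_apply 3 p
    exact (hasDerivAt_eT (p 3) j k).comp_hasFDerivAt p h3
  rw [h.fderiv]
  funext k
  simp [mul_comm]

theorem bracket_frame (i j : Fin 4) (p : Fin 4 → ℝ) :
    bracket (eVF i) (eVF j) p = comb (fun m => cc i j m - cc j i m) p := by
  funext k
  unfold bracket comb
  simp only [fderiv_eVF, eVF_eq, Pi.sub_apply]
  generalize p 3 = t
  fin_cases i <;> fin_cases j <;> fin_cases k <;>
    simp [eT, eDer, cc, Fin.sum_univ_four] <;> ring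

theorem Riem_frame (i j k : Fin 4) (p : Fin 4 → ℝ) :
    Riem (eVF i) (eVF j) (eVF k) p = comb (fun l => ∑ m,
      (cc j k m * cc i m l - cc i k m * cc j m l - (cc i j m - cc j i m) * cc m k l)) p := by
  funext n
  simp only [Riem, Pi.sub_apply]
  rw [comb_nabla _ _ _ _ _ (bracket_frame i j p)]
  simp only [nabla_frame, nabla_comb]
  simp only [comb, Fin.sum_univ_four]
  ring

theorem gMet_comb (a p : Fin 4 → ℝ) (l : Fin 4) : gMet p (comb a p) (eVF l p) = a l := by
  simp only [gMet, comb, eVF_eq]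
  generalize p 3 = t
  fin_cases l <;> simp [gMat, eT, Fin.sum_univ_four] <;> ring

set_option maxHeartbeats 4000000 in
/-- The components of the curvature tensor of g̃ in the frame {eᵢ}: the seven stated
components hold, and every component not obtained from them by the curvature
symmetries vanishes. -/
theorem nil4_curvature_components :
    ∀ (p : Fin 4 → ℝ) (i j k l : Fin 4),
      gMet p (Riem (eVF i) (eVF j) (eVF k) p) (eVF l p) = RExp i j k l := by
  intro p i j k l
  rw [Riem_frame, gMet_comb]
  clear p
  fin_cases i <;> fin_cases j <;> fin_cases k <;> fin_cases l <;>
    simp [cc, RExp, pairSign, pairIdx, curvPairMat, Fin.sum_univ_four] <;> norm_num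
end
end

section
/- Define on ℝ⁴ (minus no points; everywhere) the vector fields ξ = (2/(√5(2+t²))) e₁ + (2t/(√5(2+t²))) e₂ + (t²/(√5(2+t²))) e₃ − (2/√5) e₄, X₁ = (−t/√(1+t²)) e₁ + (1/√(1+t²)) e₂, X₂ = (−t²/((2+t²)√(1+t²))) e₁ + (−t³/((2+t²)√(1+t²))) e₂ + (2√(1+t²)/(2+t²)) e₃, X₃ = (4/(√5(2+t²))) e₁ + (4t/(√5(2+t²))) e₂ + (2t²/(√5(2+t²))) e₃ + (1/√5) e₄. Then at every point: g̃(ξ, ξ) = 1, g̃(ξ, Xᵢ) = 0 for i = 1, 2, 3, g̃(Xᵢ, Xⱼ) = δᵢⱼ for i, j = 1, 2, 3, and Σᵢ₌₁³ g̃(∇̃_{Xᵢ} Xᵢ, ξ) = 0; that is, {X₁, X₂, X₃} is an orthonormal frame of a minimal hypersurface of (ℝ⁴, g̃) with unit normal ξ. -/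
noncomputable section

/-- The unit normal field of the example minimal hypersurface. -/
def ξex (p : Fin 4 → ℝ) : Fin 4 → ℝ :=
  (2 / (Real.sqrt 5 * (2 + (p 3) ^ 2))) • eVF 0 p
    + (2 * p 3 / (Real.sqrt 5 * (2 + (p 3) ^ 2))) • eVF 1 p
    + ((p 3) ^ 2 / (Real.sqrt 5 * (2 + (p 3) ^ 2))) • eVF 2 p
    - (2 / Real.sqrt 5) • eVF 3 p

/-- The orthonormal tangent frame X₁, X₂, X₃ of the example minimal hypersurface. -/
def Xex : Fin 3 → (Fin 4 → ℝ) → (Fin 4 → ℝ) :=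
  ![fun p => (-(p 3) / Real.sqrt (1 + (p 3) ^ 2)) • eVF 0 p
      + (1 / Real.sqrt (1 + (p 3) ^ 2)) • eVF 1 p,
    fun p => (-(p 3) ^ 2 / ((2 + (p 3) ^ 2) * Real.sqrt (1 + (p 3) ^ 2))) • eVF 0 p
      + (-(p 3) ^ 3 / ((2 + (p 3) ^ 2) * Real.sqrt (1 + (p 3) ^ 2))) • eVF 1 p
      + (2 * Real.sqrt (1 + (p 3) ^ 2) / (2 + (p 3) ^ 2)) • eVF 2 p,
    fun p => (4 / (Real.sqrt 5 * (2 + (p 3) ^ 2))) • eVF 0 p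
      + (4 * p 3 / (Real.sqrt 5 * (2 + (p 3) ^ 2))) • eVF 1 p
      + (2 * (p 3) ^ 2 / (Real.sqrt 5 * (2 + (p 3) ^ 2))) • eVF 2 p
      + (1 / Real.sqrt 5) • eVF 3 p]

/-- The t-derivative of the metric matrix. -/
def dG (t : ℝ) : Matrix (Fin 4) (Fin 4) ℝ :=
  !![0, -1, t, 0;
     -1, 2 * t, -1 - 3 * t ^ 2 / 2, 0;
     t, -1 - 3 * t ^ 2 / 2, 2 * t + t ^ 3, 0;
     0, 0, 0, 0]

theorem pd_dep (i : Fin 4) (F : ℝ → ℝ) (p : Fin 4 → ℝ) :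
    pd i (fun q => F (q 3)) p = if i = 3 then deriv F (p 3) else 0 := by
  unfold pd
  split_ifs with h
  · subst h; simp
  · have h' : (3 : Fin 4) ≠ i := fun e => h e.symm
    simp [Function.update_of_ne h']

theorem deriv_gMat (i j : Fin 4) (t : ℝ) : deriv (fun s => gMat s i j) t = dG t i j := by
  apply HasDerivAt.deriv
  have h1 := hasDerivAt_id' t
  have h2 : HasDerivAt (fun s : ℝ => s ^ 2) (2 * t) t := by simpa using hasDerivAt_pow 2 t
  have h4 : HasDerivAt (fun s : ℝ => s ^ 4) (4 * t ^ 3) t := by simpa using hasDerivAt_pow 4 t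
  have hc : ∀ c : ℝ, HasDerivAt (fun _ : ℝ => c) 0 t := fun c => hasDerivAt_const t c
  have hA : HasDerivAt (fun s : ℝ => -s * (1 + s ^ 2 / 2)) (-1 - 3 * t ^ 2 / 2) t :=
    (h1.neg.mul ((h2.div_const 2).const_add 1)).congr_deriv (by simp only [Pi.neg_apply]; ring)
  have hB : HasDerivAt (fun s : ℝ => s ^ 2 / 2) t t :=
    (h2.div_const 2).congr_deriv (by ring)
  have hC : HasDerivAt (fun s : ℝ => 1 + s ^ 2 + s ^ 4 / 4) (2 * t + t ^ 3) t :=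
    ((h2.const_add 1).add (h4.div_const 4)).congr_deriv (by ring)
  have hD : HasDerivAt (fun s : ℝ => 1 + s ^ 2) (2 * t) t := h2.const_add 1
  have hE : HasDerivAt (fun s : ℝ => -s) (-1) t := h1.neg
  fin_cases i <;> fin_cases j
  exacts [hc 1, hE, hB, hc 0, hE, hD, hA, hc 0, hB, hA, hC, hc 0, hc 0, hc 0, hc 0, hc 1]

theorem gMat_inv (t : ℝ) : (gMat t)⁻¹ =
    !![1 + t ^ 2 + t ^ 4 / 4, t + t ^ 3 / 2, t ^ 2 / 2, 0;
       t + t ^ 3 / 2, 1 + t ^ 2, t, 0;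
       t ^ 2 / 2, t, 1, 0;
       0, 0, 0, 1] := by
  apply Matrix.inv_eq_right_inv
  ext i j
  fin_cases i <;> fin_cases j <;>
    simp [gMat, Matrix.mul_apply, Fin.sum_univ_four] <;> ring

theorem key (X : (Fin 4 → ℝ) → (Fin 4 → ℝ)) (F : Fin 4 → ℝ → ℝ) (p v Z : Fin 4 → ℝ)
    (hX : ∀ q k, X q k = F k (q 3)) (hv : ∀ k, X p 3 * deriv (F k) (p 3) = v k) :
    gMet p (nabla X X p) Z =
      gMet p v Z
      + X p 3 * (∑ j, ∑ m, dG (p 3) j m * X p j * Z m)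
      - Z 3 / 2 * (∑ i, ∑ j, dG (p 3) i j * X p i * X p j) := by
  have hn : ∀ k, nabla X X p k = v k + ∑ i, ∑ j, Chr p k i j * X p i * X p j := by
    intro k
    unfold nabla
    simp only [fun q => hX q k, pd_dep k, pd_dep]
    rw [← hv]
    simp
  have hC : ∀ k i j, Chr p k i j = (1 / 2) * ∑ l, (gMat (p 3))⁻¹ k l *
    ((if i = 3 then dG (p 3) j l else 0) + (if j = 3 then dG (p 3) i l else 0)
      - (if l = 3 then dG (p 3) i j else 0)) := by
    intro k i j
    unfold Chr
    have := fun a b c => pd_dep a (fun s => gMat s b c) p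
    simp only [this, deriv_gMat]
  have h0 : ∀ m, ∀ D : Fin 4 → ℝ,
      ∑ k, gMat (p 3) k m * (∑ l, (gMat (p 3))⁻¹ k l * D l) = D m := by
    intro m D
    rw [gMat_inv]
    fin_cases m <;> simp [gMat, Fin.sum_univ_four] <;> ring
  have hS : ∀ k, ∑ i, ∑ j, Chr p k i j * X p i * X p j = ∑ l, (gMat (p 3))⁻¹ k l *
      (∑ i, ∑ j, (1 / 2) * ((if i = 3 then dG (p 3) j l else 0)
        + (if j = 3 then dG (p 3) i l else 0)
        - (if l = 3 then dG (p 3) i j else 0)) * X p i * X p j) := by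
    intro k
    simp only [hC, Finset.mul_sum, Finset.sum_mul]
    rw [Finset.sum_comm' (t' := Finset.univ) (s' := fun _ => Finset.univ) (by simp)]
    conv_rhs => rw [Finset.sum_comm]
    rw [Finset.sum_comm]
    refine Finset.sum_congr rfl fun i _ => ?_
    rw [Finset.sum_comm]
    conv_rhs => rw [Finset.sum_comm]
    rw [Finset.sum_comm]
    refine Finset.sum_congr rfl fun j _ => Finset.sum_congr rfl fun l _ => ?_
    ring
  have hg : gMet p (nabla X X p) Z = gMet p v Z + ∑ m, (∑ k, gMat (p 3) k m *
      (∑ i, ∑ j, Chr p k i j * X p i * X p j)) * Z m := by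
    unfold gMet
    simp only [hn]
    generalize (fun k => ∑ i, ∑ j, Chr p k i j * X p i * X p j) = W
    simp only [Fin.sum_univ_four]
    ring
  rw [hg]
  simp only [hS, h0]
  simp [Fin.sum_univ_four, dG]
  ring

theorem xi_eq (p : Fin 4 → ℝ) : ξex p =
    ![(2 + p 3 ^ 2) / (2 * √5), p 3 / √5, p 3 ^ 2 / (√5 * (2 + p 3 ^ 2)), -(2 / √5)] := by
  have h5 : √(5 : ℝ) ≠ 0 := by positivity
  have h2 : 2 + p 3 ^ 2 ≠ 0 := by positivity
  ext i
  fin_cases i <;> simp [ξex, eVF] <;> field_simp <;> ring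

theorem X0_eq (p : Fin 4 → ℝ) : Xex 0 p = ![0, 1 / √(1 + p 3 ^ 2), 0, 0] := by
  ext i
  fin_cases i <;> simp [Xex, eVF] <;> ring

theorem X1_eq (p : Fin 4 → ℝ) : Xex 1 p =
    ![0, p 3 / √(1 + p 3 ^ 2), 2 * √(1 + p 3 ^ 2) / (2 + p 3 ^ 2), 0] := by
  have h2 : 2 + p 3 ^ 2 ≠ 0 := by positivity
  have hs : √(1 + p 3 ^ 2) ≠ 0 := by positivity
  have hs2 : √(1 + p 3 ^ 2) ^ 2 = 1 + p 3 ^ 2 := Real.sq_sqrt (by positivity)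
  ext i
  fin_cases i <;> simp [Xex, eVF] <;> field_simp <;> rw [hs2] <;> ring

theorem X2_eq (p : Fin 4 → ℝ) : Xex 2 p =
    ![(2 + p 3 ^ 2) / √5, 2 * p 3 / √5, 2 * p 3 ^ 2 / (2 + p 3 ^ 2) / √5, 1 / √5] := by
  have h5 : √(5 : ℝ) ≠ 0 := by positivity
  have h2 : 2 + p 3 ^ 2 ≠ 0 := by positivity
  ext i
  fin_cases i <;> simp [Xex, eVF] <;> field_simp <;> ring

theorem min0 (p : Fin 4 → ℝ) : gMet p (nabla (Xex 0) (Xex 0) p) (ξex p) =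
    1 / √5 * (2 * p 3 / (1 + p 3 ^ 2)) := by
  have hs : √(1 + p 3 ^ 2) ≠ 0 := by positivity
  have hs2 : √(1 + p 3 ^ 2) ^ 2 = 1 + p 3 ^ 2 := Real.sq_sqrt (by positivity)
  rw [key (Xex 0) (fun k t => (![0, 1 / √(1 + t ^ 2), 0, 0] : Fin 4 → ℝ) k) p 0 _
    (fun q k => by rw [X0_eq]) (fun k => by simp [X0_eq])]
  rw [← hs2]
  simp only [X0_eq, xi_eq]
  generalize √(1 + p 3 ^ 2) = s at *
  simp [Fin.sum_univ_four, gMet, dG]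
  field_simp

theorem min1 (p : Fin 4 → ℝ) : gMet p (nabla (Xex 1) (Xex 1) p) (ξex p) =
    1 / √5 * (2 * p 3 ^ 3 / (1 + p 3 ^ 2) - 2 * p 3 ^ 3 / (2 + p 3 ^ 2)) := by
  have h1 : 1 + p 3 ^ 2 ≠ 0 := by positivity
  have h2 : 2 + p 3 ^ 2 ≠ 0 := by positivity
  have h5 : √(5 : ℝ) ≠ 0 := by positivity
  have hs : √(1 + p 3 ^ 2) ≠ 0 := by positivity
  have hs2 : √(1 + p 3 ^ 2) ^ 2 = 1 + p 3 ^ 2 := Real.sq_sqrt (by positivity)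
  rw [key (Xex 1) (fun k t => (![0, t / √(1 + t ^ 2), 2 * √(1 + t ^ 2) / (2 + t ^ 2), 0] :
    Fin 4 → ℝ) k) p 0 _ (fun q k => by rw [X1_eq]) (fun k => by simp [X1_eq])]
  simp only [X1_eq, xi_eq]
  generalize √(1 + p 3 ^ 2) = s at *
  simp [Fin.sum_univ_four, gMet, dG]
  have hs4 : s ^ 4 = (1 + p 3 ^ 2) ^ 2 := by rw [← hs2]; ring
  field_simp
  ring_nf
  simp only [hs2, hs4]
  ring

theorem min2 (p : Fin 4 → ℝ) : gMet p (nabla (Xex 2) (Xex 2) p) (ξex p) =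
    -(1 / √5 * (4 * p 3 / (2 + p 3 ^ 2))) := by
  have h2 : 2 + p 3 ^ 2 ≠ 0 := by positivity
  have h5 : √(5 : ℝ) ≠ 0 := by positivity
  have h55 : √(5 : ℝ) ^ 2 = 5 := Real.sq_sqrt (by positivity)
  rw [key (Xex 2) (fun k t => (![(2 + t ^ 2) / √5, 2 * t / √5,
    2 * t ^ 2 / (2 + t ^ 2) / √5, 1 / √5] : Fin 4 → ℝ) k) p
    ![2 * p 3 / 5, 2 / 5, 8 * p 3 / (2 + p 3 ^ 2) ^ 2 / 5, 0] _ (fun q k => by rw [X2_eq]) ?_]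
  · simp only [X2_eq, xi_eq]
    simp [Fin.sum_univ_four, gMet, dG, gMat]
    field_simp
    simp only [h55]
    ring
  · intro k
    have hq : HasDerivAt (fun s : ℝ => s ^ 2) (2 * p 3) (p 3) := by
      simpa using hasDerivAt_pow 2 (p 3)
    have e0 : deriv (fun t : ℝ => (2 + t ^ 2) / √5) (p 3) = 2 * p 3 / √5 :=
      ((hq.const_add 2).div_const _).deriv
    have e1 : deriv (fun t : ℝ => 2 * t / √5) (p 3) = 2 * 1 / √5 :=
      (((hasDerivAt_id' (p 3)).const_mul 2).div_const _).deriv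
    have e2 : deriv (fun t : ℝ => 2 * t ^ 2 / (2 + t ^ 2) / √5) (p 3) =
        (2 * (2 * p 3) * (2 + p 3 ^ 2) - 2 * p 3 ^ 2 * (2 * p 3)) / (2 + p 3 ^ 2) ^ 2 / √5 :=
      (((hq.const_mul 2).div (hq.const_add 2) h2).div_const _).deriv
    rw [X2_eq]
    fin_cases k
    · change 1 / √5 * deriv (fun t : ℝ => (2 + t ^ 2) / √5) (p 3) = 2 * p 3 / 5
      rw [e0]; field_simp; simp only [h55]; ring
    · change 1 / √5 * deriv (fun t : ℝ => 2 * t / √5) (p 3) = 2 / 5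
      rw [e1]; field_simp; simp only [h55]
    · change 1 / √5 * deriv (fun t : ℝ => 2 * t ^ 2 / (2 + t ^ 2) / √5) (p 3)
        = 8 * p 3 / (2 + p 3 ^ 2) ^ 2 / 5
      rw [e2]; field_simp; simp only [h55]; ring
    · change 1 / √5 * deriv (fun t : ℝ => 1 / √5) (p 3) = 0
      simp

/-- ξ is a unit field, {X₁,X₂,X₃} is orthonormal and orthogonal to ξ, and
Σᵢ g̃(∇̃_{Xᵢ}Xᵢ, ξ) = 0: the example hypersurface is minimal. -/
theorem nil4_minimal_example : ∀ p : Fin 4 → ℝ,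
    gMet p (ξex p) (ξex p) = 1 ∧
    (∀ i : Fin 3, gMet p (ξex p) (Xex i p) = 0) ∧
    (∀ i j : Fin 3, gMet p (Xex i p) (Xex j p) = if i = j then 1 else 0) ∧
    (∑ i, gMet p (nabla (Xex i) (Xex i) p) (ξex p)) = 0 := by
  intro p
  have h1 : 1 + p 3 ^ 2 ≠ 0 := by positivity
  have h2 : 2 + p 3 ^ 2 ≠ 0 := by positivity
  have h5 : √(5 : ℝ) ≠ 0 := by positivity
  have h55 : √(5 : ℝ) ^ 2 = 5 := Real.sq_sqrt (by positivity)
  have hs : √(1 + p 3 ^ 2) ≠ 0 := by positivity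
  have hs2 : √(1 + p 3 ^ 2) ^ 2 = 1 + p 3 ^ 2 := Real.sq_sqrt (by positivity)
  have hs4 : √(1 + p 3 ^ 2) ^ 4 = (1 + p 3 ^ 2) ^ 2 := by
    rw [show √(1 + p 3 ^ 2) ^ 4 = (√(1 + p 3 ^ 2) ^ 2) ^ 2 by ring, hs2]
  refine ⟨?_, ?_, ?_, ?_⟩
  · rw [xi_eq]
    simp [Fin.sum_univ_four, gMet, gMat]
    field_simp
    simp only [h55]
    ring
  · intro i
    fin_cases i
    · change gMet p (ξex p) (Xex 0 p) = 0
      rw [xi_eq, X0_eq]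
      simp [Fin.sum_univ_four, gMet, gMat]
      field_simp
      ring
    · change gMet p (ξex p) (Xex 1 p) = 0
      rw [xi_eq, X1_eq]
      simp [Fin.sum_univ_four, gMet, gMat]
      field_simp
      ring_nf
      try simp only [hs2, hs4]
      try ring
    · change gMet p (ξex p) (Xex 2 p) = 0
      rw [xi_eq, X2_eq]
      simp [Fin.sum_univ_four, gMet, gMat]
      field_simp
      ring
  · have g00 : gMet p (Xex 0 p) (Xex 0 p) = 1 := by
      rw [X0_eq]
      simp [Fin.sum_univ_four, gMet, gMat]
      field_simp
      rw [hs2]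
    have g01 : gMet p (Xex 0 p) (Xex 1 p) = 0 := by
      rw [X0_eq, X1_eq]
      simp [Fin.sum_univ_four, gMet, gMat]
      field_simp
      rw [hs2]
      ring
    have g02 : gMet p (Xex 0 p) (Xex 2 p) = 0 := by
      rw [X0_eq, X2_eq]
      simp [Fin.sum_univ_four, gMet, gMat]
      field_simp
      ring
    have g11 : gMet p (Xex 1 p) (Xex 1 p) = 1 := by
      rw [X1_eq]
      simp [Fin.sum_univ_four, gMet, gMat]
      generalize √(1 + p 3 ^ 2) = s at *
      field_simp
      ring_nf
      simp only [hs2, hs4]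
      ring
    have g12 : gMet p (Xex 1 p) (Xex 2 p) = 0 := by
      rw [X1_eq, X2_eq]
      simp [Fin.sum_univ_four, gMet, gMat]
      generalize √(1 + p 3 ^ 2) = s at *
      field_simp
      ring_nf
    have g22 : gMet p (Xex 2 p) (Xex 2 p) = 1 := by
      rw [X2_eq]
      simp [Fin.sum_univ_four, gMet, gMat]
      field_simp
      simp only [h55]
      ring
    have hsymm : ∀ X Y, gMet p X Y = gMet p Y X := by
      intro X Y
      simp [Fin.sum_univ_four, gMet, gMat]
      ring
    intro i j
    fin_cases i <;> fin_cases j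
    exacts [g00, g01, g02, (hsymm _ _).trans g01, g11, g12, (hsymm _ _).trans g02,
      (hsymm _ _).trans g12, g22]
  · rw [Fin.sum_univ_three, min0, min1, min2]
    field_simp
    ring
end
end
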